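/- Let L be a set closed under binary operations ∧, ∨, → and a unary operation ¬, and let C : 2^L → 2^L satisfy Inclusion, Idempotence, Cautious Monotonicity, Conditional Monotonicity, Threshold Monotonicity, Weak Compactness, and the Introduction-Elimination rules: C(A ∪ {a ∧ b}) = C(A ∪ {a, b}); C(A ∪ {a, ¬a}) = L; C(A ∪ {¬a}) = L implies a ∈ C(A); C(A ∪ {a}) ∩ C(A ∪ {b}) ⊆ C(A ∪ {a ∨ b}); a ∈ C(A) implies a ∨ b ∈ C(A), and b ∈ C(A) implies a ∨ b ∈ C(A); b ∈ C(A ∪ {a}) implies a → b ∈ C(A); b ∈ C(A ∪ {a, a → b}). Then there exist a set M, a binary relation ⊨ ⊆ M × L that behaves classically for each connective (x ⊨ a ∧ b iff x ⊨ a and x ⊨ b; x ⊨ ¬a iff not x ⊨ a; x ⊨ a ∨ b iff x ⊨ a or x ⊨ b; x ⊭ a → b iff x ⊨ a and x ⊭ b), and a definability-preserving function f on definable subsets of M satisfying Contraction, Coherence and Local Monotonicity, such that C(A) = Th(f(Mod(A))) for all A ⊆ L. -/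

import Mathlib

/-- Mod(A): the set of models satisfying every formula in A. -/
def ModSet {M L : Type} (sat : M → L → Prop) (A : Set L) : Set M :=
  {x | ∀ a ∈ A, sat x a}

/-- Th(X): the set of formulas satisfied in every model of X. -/
def ThSet {M L : Type} (sat : M → L → Prop) (X : Set M) : Set L :=
  {a | ∀ x ∈ X, sat x a}

/-- A set of models is definable iff it is the set of models of its theory. -/
def IsDefinable {M L : Type} (sat : M → L → Prop) (X : Set M) : Prop :=
  X = ModSet sat (ThSet sat X)

/-!
The models are the maximal consistent sets, where `A` is consistent when `C A` is not the whole
language. Weak Compactness makes consistency a property closed under unions of chains, so every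
consistent set extends to a maximal one, and the Introduction-Elimination rules ensure that
membership in a maximal consistent set is classical. Extending `C A ∪ {¬a}` for `a ∉ C A` shows
that `C A` is the intersection of the maximal consistent sets above it, i.e. `Th (Mod (C A)) = C A`.
Then `f X = Mod (C (Th X))` represents `C`.

Although `C` need not be monotone, Coherence follows from Threshold Monotonicity: if `X ⊆ Y` and
`x ∈ X ∩ f Y`, then `C (Th X) ⊆ C (C (Th Y) ∪ Th X) ⊆ C x = x`.
-/

open Set

section Consequence

variable {L : Type*} {C : Set L → Set L} {A B : Set L}

theorem consequence_eq_univ_of_subset (hCM : ∀ A B, A ⊆ B → B ⊆ C A → C A ⊆ C B)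
    (hAB : A ⊆ B) (hA : C A = univ) : C B = univ :=
  univ_subset_iff.mp (hA ▸ hCM A B hAB (hA ▸ subset_univ B))

theorem consequence_eq_of_subset_of_subset (hIdem : ∀ A, C (C A) = C A)
    (hCM : ∀ A B, A ⊆ B → B ⊆ C A → C A ⊆ C B) (hCondM : ∀ A B, C (A ∪ B) ⊆ C (C A ∪ B))
    (hAB : A ⊆ B) (hBC : B ⊆ C A) : C B = C A := by
  refine Subset.antisymm ?_ (hCM A B hAB hBC)
  calc
    C B = C (A ∪ B) := by rw [union_eq_self_of_subset_left hAB]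
    _ ⊆ C (C A ∪ B) := hCondM A B
    _ = C A := by rw [union_eq_self_of_subset_right hBC, hIdem]

end Consequence

/-- `x` is maximal among the sets that are consistent for the operation `C`, a set `y` being
consistent when `C y` is not the whole language. These sets are the points of the canonical
model. -/
def MaximalConsistent {L : Type*} (C : Set L → Set L) (x : Set L) : Prop :=
  Maximal (fun y ↦ C y ≠ univ) x

namespace MaximalConsistent

variable {L : Type*} {C : Set L → Set L} {x A B : Set L} {a b : L}

theorem exists_superset (hCM : ∀ A B, A ⊆ B → B ⊆ C A → C A ⊆ C B)
    (hWC : ∀ A, C A = univ → ∃ B, B ⊆ A ∧ B.Finite ∧ C B = univ) (hA : C A ≠ univ) :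
    ∃ x, A ⊆ x ∧ MaximalConsistent C x := by
  refine zorn_subset_nonempty {x | C x ≠ univ} (fun c hc hchain hne ↦ ?_) A hA
  refine ⟨⋃₀ c, fun hinc ↦ ?_, fun _ ↦ subset_sUnion_of_mem⟩
  obtain ⟨B, hBc, hBfin, hB⟩ := hWC _ hinc
  obtain ⟨y, hyc, hBy⟩ :=
    DirectedOn.exists_mem_subset_of_finite_of_subset_sUnion hne hchain.directedOn hBfin hBc
  exact hc hyc (consequence_eq_univ_of_subset hCM hBy hB)

theorem consequence_eq (hIncl : ∀ A, A ⊆ C A) (hIdem : ∀ A, C (C A) = C A)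
    (hx : MaximalConsistent C x) : C x = x :=
  (hx.eq_of_subset ((hIdem x).symm ▸ hx.prop) (hIncl x)).symm

theorem subset_iff (hx : MaximalConsistent C x) : B ⊆ x ↔ C (x ∪ B) ≠ univ := by
  refine ⟨fun hB ↦ ?_, fun h ↦ subset_union_right.trans (hx.le_of_ge h subset_union_left)⟩
  rw [union_eq_self_of_subset_right hB]
  exact hx.prop

theorem mem_iff (hx : MaximalConsistent C x) : a ∈ x ↔ C (x ∪ {a}) ≠ univ :=
  singleton_subset_iff.symm.trans hx.subset_iff

theorem conj_mem_iff {conj : L → L → L} (hAnd : ∀ A a b, C (A ∪ {conj a b}) = C (A ∪ {a, b}))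
    (hx : MaximalConsistent C x) : conj a b ∈ x ↔ a ∈ x ∧ b ∈ x := by
  rw [hx.mem_iff, hAnd, ← hx.subset_iff, pair_subset_iff]

theorem neg_mem_iff {neg : L → L} (hIncl : ∀ A, A ⊆ C A) (hIdem : ∀ A, C (C A) = C A)
    (hNegI : ∀ A a, C (A ∪ {a, neg a}) = univ) (hNegE : ∀ A a, C (A ∪ {neg a}) = univ → a ∈ C A)
    (hx : MaximalConsistent C x) : neg a ∈ x ↔ a ∉ x := by
  refine ⟨fun hna ha ↦ hx.subset_iff.mp (pair_subset ha hna) (hNegI x a), fun ha ↦ ?_⟩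
  exact hx.mem_iff.mpr fun h ↦ ha (hx.consequence_eq hIncl hIdem ▸ hNegE x a h)

theorem disj_mem_iff {disj : L → L → L} (hIncl : ∀ A, A ⊆ C A) (hIdem : ∀ A, C (C A) = C A)
    (hOrL : ∀ A a b, C (A ∪ {a}) ∩ C (A ∪ {b}) ⊆ C (A ∪ {disj a b}))
    (hOrR₁ : ∀ A a b, a ∈ C A → disj a b ∈ C A) (hOrR₂ : ∀ A a b, b ∈ C A → disj a b ∈ C A)
    (hx : MaximalConsistent C x) : disj a b ∈ x ↔ a ∈ x ∨ b ∈ x := by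
  have hCx : C x = x := hx.consequence_eq hIncl hIdem
  constructor
  · contrapose!
    simp only [hx.mem_iff, not_not]
    rintro ⟨ha, hb⟩
    simpa only [ha, hb, inter_self, univ_subset_iff] using hOrL x a b
  · rintro (ha | hb)
    · exact hCx ▸ hOrR₁ x a b (hIncl x ha)
    · exact hCx ▸ hOrR₂ x a b (hIncl x hb)

theorem impl_notMem_iff {impl : L → L → L} (hIncl : ∀ A, A ⊆ C A) (hIdem : ∀ A, C (C A) = C A)
    (hImpR : ∀ A a b, b ∈ C (A ∪ {a}) → impl a b ∈ C A)
    (hImpL : ∀ A a b, b ∈ C (A ∪ {a, impl a b})) (hx : MaximalConsistent C x) :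
    impl a b ∉ x ↔ a ∈ x ∧ b ∉ x := by
  have hCx : C x = x := hx.consequence_eq hIncl hIdem
  constructor
  · intro himpl
    have hb : b ∉ C (x ∪ {a}) := fun h ↦ himpl (hCx ▸ hImpR x a b h)
    exact ⟨hx.mem_iff.mpr fun h ↦ hb (h ▸ mem_univ b), fun h ↦ hb (hIncl _ (Or.inl h))⟩
  · rintro ⟨ha, hb⟩ himpl
    have hmp : b ∈ C (x ∪ {a, impl a b}) := hImpL x a b
    rw [union_eq_self_of_subset_right (pair_subset ha himpl), hCx] at hmp
    exact hb hmp

theorem mem_consequence_of_forall {neg : L → L} (hIncl : ∀ A, A ⊆ C A)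
    (hIdem : ∀ A, C (C A) = C A) (hCM : ∀ A B, A ⊆ B → B ⊆ C A → C A ⊆ C B)
    (hWC : ∀ A, C A = univ → ∃ B, B ⊆ A ∧ B.Finite ∧ C B = univ)
    (hNegI : ∀ A a, C (A ∪ {a, neg a}) = univ) (hNegE : ∀ A a, C (A ∪ {neg a}) = univ → a ∈ C A)
    (h : ∀ x, MaximalConsistent C x → C A ⊆ x → a ∈ x) : a ∈ C A := by
  by_contra ha
  have hcons : C (C A ∪ {neg a}) ≠ univ := fun hinc ↦ ha (hIdem A ▸ hNegE _ a hinc)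
  obtain ⟨x, hsub, hx⟩ := exists_superset hCM hWC hcons
  obtain ⟨hAx, hna⟩ := union_subset_iff.mp hsub
  exact (hx.neg_mem_iff hIncl hIdem hNegI hNegE).mp (hna rfl) (h x hx hAx)

end MaximalConsistent

section Galois

variable {M L : Type} (sat : M → L → Prop)

theorem subset_thSet_modSet (A : Set L) : A ⊆ ThSet sat (ModSet sat A) :=
  subset_upperPolar_lowerPolar sat A

theorem thSet_anti : Antitone (ThSet sat) :=
  upperPolar_anti sat

theorem modSet_anti : Antitone (ModSet sat) :=
  lowerPolar_anti sat

theorem modSet_thSet_modSet (A : Set L) : ModSet sat (ThSet sat (ModSet sat A)) = ModSet sat A :=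
  lowerPolar_upperPolar_lowerPolar sat A

end Galois

/-- The canonical satisfaction relation of `C`: the models are the maximal consistent sets, and a
model satisfies exactly its members. -/
def canonicalSat {L : Type*} (C : Set L → Set L) (x : {x : Set L // MaximalConsistent C x})
    (a : L) : Prop :=
  a ∈ x.1

theorem thSet_modSet_canonicalSat {L : Type} {C : Set L → Set L} {neg : L → L}
    (hIncl : ∀ A, A ⊆ C A) (hIdem : ∀ A, C (C A) = C A)
    (hCM : ∀ A B, A ⊆ B → B ⊆ C A → C A ⊆ C B)
    (hWC : ∀ A, C A = univ → ∃ B, B ⊆ A ∧ B.Finite ∧ C B = univ)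
    (hNegI : ∀ A a, C (A ∪ {a, neg a}) = univ) (hNegE : ∀ A a, C (A ∪ {neg a}) = univ → a ∈ C A)
    (A : Set L) : ThSet (canonicalSat C) (ModSet (canonicalSat C) (C A)) = C A :=
  Subset.antisymm
    (fun _ ha ↦ MaximalConsistent.mem_consequence_of_forall hIncl hIdem hCM hWC hNegI hNegE
      fun x hx hAx ↦ ha ⟨x, hx⟩ hAx)
    (subset_thSet_modSet _ _)

/-- The choice function `f` induced by `C` on the models of `sat`: it selects from `X` the models
of all the consequences of the theory of `X`. It is total, but only its values on definable sets
matter. -/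
def preferredModels {M L : Type} (sat : M → L → Prop) (C : Set L → Set L) (X : Set M) : Set M :=
  ModSet sat (C (ThSet sat X))

namespace preferredModels

variable {M L : Type} {sat : M → L → Prop} {C : Set L → Set L} {X Y : Set M}

theorem eq_modSet_thSet (X : Set M) :
    preferredModels sat C X = ModSet sat (ThSet sat (preferredModels sat C X)) :=
  (modSet_thSet_modSet sat _).symm

theorem contraction (hIncl : ∀ A, A ⊆ C A) (hX : IsDefinable sat X) :
    preferredModels sat C X ⊆ X :=
  (modSet_anti sat (hIncl _)).trans hX.symm.subset

theorem coherence (hCondM : ∀ A B, C (A ∪ B) ⊆ C (C A ∪ B))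
    (hThr : ∀ A B B', C A ⊆ B → B ⊆ B' → C B ⊆ C B')
    (hclosed : ∀ x, C {a | sat x a} ⊆ {a | sat x a}) (hXY : X ⊆ Y) :
    X ∩ preferredModels sat C Y ⊆ preferredModels sat C X := by
  rintro x ⟨hxX, hxY⟩
  have hThX : ThSet sat X ⊆ {a | sat x a} := fun _ ha ↦ ha x hxX
  calc
    C (ThSet sat X) = C (ThSet sat Y ∪ ThSet sat X) := by
      rw [union_eq_self_of_subset_left (thSet_anti sat hXY)]
    _ ⊆ C (C (ThSet sat Y) ∪ ThSet sat X) := hCondM _ _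
    _ ⊆ C {a | sat x a} := hThr _ _ _ subset_union_left (union_subset hxY hThX)
    _ ⊆ {a | sat x a} := hclosed x

theorem local_monotonicity (hCM : ∀ A B, A ⊆ B → B ⊆ C A → C A ⊆ C B)
    (hThMod : ∀ A, ThSet sat (ModSet sat (C A)) = C A)
    (hXY : preferredModels sat C X ⊆ Y) (hYX : Y ⊆ X) :
    preferredModels sat C Y ⊆ preferredModels sat C X := by
  have hThY : ThSet sat Y ⊆ C (ThSet sat X) := (thSet_anti sat hXY).trans (hThMod _).subset
  exact modSet_anti sat (hCM _ _ (thSet_anti sat hYX) hThY)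

theorem thSet_modSet (hIncl : ∀ A, A ⊆ C A) (hIdem : ∀ A, C (C A) = C A)
    (hCM : ∀ A B, A ⊆ B → B ⊆ C A → C A ⊆ C B) (hCondM : ∀ A B, C (A ∪ B) ⊆ C (C A ∪ B))
    (hThMod : ∀ A, ThSet sat (ModSet sat (C A)) = C A) (A : Set L) :
    ThSet sat (preferredModels sat C (ModSet sat A)) = C A := by
  have hsub : ThSet sat (ModSet sat A) ⊆ C A :=
    (thSet_anti sat (modSet_anti sat (hIncl A))).trans (hThMod A).subset
  have hC : C (ThSet sat (ModSet sat A)) = C A :=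
    consequence_eq_of_subset_of_subset hIdem hCM hCondM (subset_thSet_modSet sat A) hsub
  rw [preferredModels, hC, hThMod]

end preferredModels

/-- Representation with classical connectives: an operation with the five
structural properties, Weak Compactness and the Introduction-Elimination
rules is generated by a classical satisfaction relation and a
definability-preserving choice function. -/
theorem stmt_18 {L : Type}
    (conj disj impl : L → L → L) (neg : L → L)
    (C : Set L → Set L)
    (hIncl : ∀ A : Set L, A ⊆ C A)
    (hIdem : ∀ A : Set L, C (C A) = C A)
    (hCM : ∀ A B : Set L, A ⊆ B → B ⊆ C A → C A ⊆ C B)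
    (hCondM : ∀ A B : Set L, C (A ∪ B) ⊆ C (C A ∪ B))
    (hThr : ∀ A B B' : Set L, C A ⊆ B → B ⊆ B' → C B ⊆ C B')
    (hWC : ∀ A : Set L, C A = Set.univ →
      ∃ B : Set L, B ⊆ A ∧ B.Finite ∧ C B = Set.univ)
    (hAnd : ∀ (A : Set L) (a b : L), C (A ∪ {conj a b}) = C (A ∪ {a, b}))
    (hNegI : ∀ (A : Set L) (a : L), C (A ∪ {a, neg a}) = Set.univ)
    (hNegE : ∀ (A : Set L) (a : L), C (A ∪ {neg a}) = Set.univ → a ∈ C A)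
    (hOrL : ∀ (A : Set L) (a b : L),
      C (A ∪ {a}) ∩ C (A ∪ {b}) ⊆ C (A ∪ {disj a b}))
    (hOrR₁ : ∀ (A : Set L) (a b : L), a ∈ C A → disj a b ∈ C A)
    (hOrR₂ : ∀ (A : Set L) (a b : L), b ∈ C A → disj a b ∈ C A)
    (hImpR : ∀ (A : Set L) (a b : L), b ∈ C (A ∪ {a}) → impl a b ∈ C A)
    (hImpL : ∀ (A : Set L) (a b : L), b ∈ C (A ∪ {a, impl a b})) :
    ∃ (M : Type) (sat : M → L → Prop) (f : Set M → Set M),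
      (∀ (x : M) (a b : L), sat x (conj a b) ↔ sat x a ∧ sat x b) ∧
      (∀ (x : M) (a : L), sat x (neg a) ↔ ¬ sat x a) ∧
      (∀ (x : M) (a b : L), sat x (disj a b) ↔ sat x a ∨ sat x b) ∧
      (∀ (x : M) (a b : L), ¬ sat x (impl a b) ↔ sat x a ∧ ¬ sat x b) ∧
      (∀ A : Set L,
        f (ModSet sat A) = ModSet sat (ThSet sat (f (ModSet sat A)))) ∧
      (∀ X : Set M, IsDefinable sat X → f X ⊆ X) ∧
      (∀ X Y : Set M, IsDefinable sat X → IsDefinable sat Y →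
        X ⊆ Y → X ∩ f Y ⊆ f X) ∧
      (∀ X Y : Set M, IsDefinable sat X → IsDefinable sat Y →
        f X ⊆ Y → Y ⊆ X → f Y ⊆ f X) ∧
      (∀ A : Set L, C A = ThSet sat (f (ModSet sat A))) := by
  have hThMod := thSet_modSet_canonicalSat hIncl hIdem hCM hWC hNegI hNegE
  refine ⟨_, canonicalSat C, preferredModels (canonicalSat C) C, ?conj, ?neg, ?disj, ?impl,
    ?definability, ?contraction, ?coherence, ?localMonotonicity, ?representation⟩
  case conj => exact fun x _ _ ↦ x.2.conj_mem_iff hAnd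
  case neg => exact fun x _ ↦ x.2.neg_mem_iff hIncl hIdem hNegI hNegE
  case disj => exact fun x _ _ ↦ x.2.disj_mem_iff hIncl hIdem hOrL hOrR₁ hOrR₂
  case impl => exact fun x _ _ ↦ x.2.impl_notMem_iff hIncl hIdem hImpR hImpL
  case definability => exact fun A ↦ preferredModels.eq_modSet_thSet (ModSet _ A)
  case contraction => exact fun _ ↦ preferredModels.contraction hIncl
  case coherence =>
    exact fun _ _ _ _ ↦ preferredModels.coherence hCondM hThr
      fun x ↦ (x.2.consequence_eq hIncl hIdem).subset
  case localMonotonicity =>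
    exact fun _ _ _ _ ↦ preferredModels.local_monotonicity hCM hThMod
  case representation =>
    exact fun A ↦ (preferredModels.thSet_modSet hIncl hIdem hCM hCondM hThMod A).symm
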